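/- For all δ ≥ 0 and A ≥ 0 there exists a constant C = C(δ, A) with the following property. Let Y be a proper geodesic δ-hyperbolic metric space, let ρ₀ be a ray in Y, let h be a horofunction at ρ₀ with constant A, and let P be a group of isometries of Y such that every φ ∈ P maps each ray asymptotic to ρ₀ to a ray asymptotic to ρ₀ and no element of P is hyperbolic. Then there exists a P-invariant subset B ⊆ Y with {h ≤ 0} ⊆ B ⊆ {h ≤ C}; in other words, the horoball {h ≤ 0} is uniformly close to a P-invariant one. -/

import Mathlib

section HyperbolicGeometry

variable {Y : Type*} [MetricSpace Y]

/-- `s` is a geodesic segment from `x` to `y`: the image of an isometric embedding of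
`[0, dist x y]` sending `0 ↦ x` and `dist x y ↦ y`. -/
def IsGeodesicSegment (s : Set Y) (x y : Y) : Prop :=
  ∃ c : ℝ → Y,
    (∀ t₁ ∈ Set.Icc (0 : ℝ) (dist x y), ∀ t₂ ∈ Set.Icc (0 : ℝ) (dist x y),
      dist (c t₁) (c t₂) = |t₁ - t₂|) ∧
    c 0 = x ∧ c (dist x y) = y ∧ s = c '' Set.Icc (0 : ℝ) (dist x y)

/-- A metric space is geodesic if any two points are connected by a geodesic segment. -/
def IsGeodesicSpace (Y : Type*) [MetricSpace Y] : Prop :=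
  ∀ x y : Y, ∃ s : Set Y, IsGeodesicSegment s x y

/-- `Y` is `δ`-hyperbolic: every geodesic triangle is `δ`-thin, i.e. each side is contained in
the `δ`-neighborhood of the union of the other two sides. -/
def IsDeltaHyperbolic (Y : Type*) [MetricSpace Y] (δ : ℝ) : Prop :=
  ∀ x y z : Y, ∀ sxy syz szx : Set Y,
    IsGeodesicSegment sxy x y → IsGeodesicSegment syz y z → IsGeodesicSegment szx z x →
      (∀ p ∈ sxy, ∃ q ∈ syz ∪ szx, dist p q ≤ δ) ∧
      (∀ p ∈ syz, ∃ q ∈ szx ∪ sxy, dist p q ≤ δ) ∧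
      (∀ p ∈ szx, ∃ q ∈ sxy ∪ syz, dist p q ≤ δ)

/-- A (geodesic) ray in `Y`, parameterized by `[0, ∞)`. -/
def IsRay (ρ : ℝ → Y) : Prop :=
  ∀ s t : ℝ, 0 ≤ s → 0 ≤ t → dist (ρ s) (ρ t) = |s - t|

/-- Two rays are asymptotic if their images are at finite Hausdorff distance. -/
def AsymptoticRays (ρ ρ' : ℝ → Y) : Prop :=
  ∃ D : ℝ, (∀ s : ℝ, 0 ≤ s → ∃ t : ℝ, 0 ≤ t ∧ dist (ρ s) (ρ' t) ≤ D) ∧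
    (∀ t : ℝ, 0 ≤ t → ∃ s : ℝ, 0 ≤ s ∧ dist (ρ s) (ρ' t) ≤ D)

/-- `h` is a horofunction at (the ideal point of) the ray `ρ₀` with constant `A`:
`h` is `1`-Lipschitz and decays with coarse slope `-1` along every ray asymptotic to `ρ₀`. -/
def IsHorofunction (ρ₀ : ℝ → Y) (A : ℝ) (h : Y → ℝ) : Prop :=
  LipschitzWith 1 h ∧
    ∀ ρ : ℝ → Y, IsRay ρ → AsymptoticRays ρ ρ₀ →
      ∀ t₁ t₂ : ℝ, 0 ≤ t₁ → 0 ≤ t₂ → |(h (ρ t₂) - h (ρ t₁)) - (t₁ - t₂)| ≤ A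

/-- An isometry `φ` of `Y` is hyperbolic if some (equivalently, every) orbit map
`ℤ → Y`, `n ↦ φⁿ y`, is a quasi-isometric embedding. -/
def IsHyperbolicIsometry (φ : Y ≃ᵢ Y) : Prop :=
  ∃ y : Y, ∃ L A : ℝ, 0 < L ∧ ∀ m n : ℤ,
    L⁻¹ * |(m : ℝ) - (n : ℝ)| - A ≤ dist ((φ ^ m) y) ((φ ^ n) y) ∧
    dist ((φ ^ m) y) ((φ ^ n) y) ≤ L * |(m : ℝ) - (n : ℝ)| + A

end HyperbolicGeometry

/-!
Pulling `h` back by `φ ∈ P` gives another horofunction at `ρ₀`. Two horofunctions at `ρ₀` have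
nearly the same increments: rays towards `ρ₀` issuing from `x` and `y` come `2δ`-close to each
other, at parameters `t` and `s` say, and both horofunctions must see `s - t` as the increment from
`x` to `y`. Hence `h ∘ φ - h` is constant up to a bounded error. If that constant were large, `h`
would grow by a definite amount under each application of `φ`; as `h` is Lipschitz, the orbits of
`φ` would be quasi-geodesics. So every `φ ∈ P` displaces `h` by a bounded amount, and the `P`-orbit
of `{h ≤ 0}` is the required set.
-/

open Filter Set Topology

section Geodesics

variable {Y : Type*} [MetricSpace Y]

/-- `c` restricts to a unit-speed geodesic on `[0, ℓ]`, the parametrised counterpart of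
`IsGeodesicSegment`; values of `c` outside `[0, ℓ]` are unconstrained. -/
def IsGeodesicPath (c : ℝ → Y) (ℓ : ℝ) : Prop :=
  ∀ s ∈ Icc 0 ℓ, ∀ t ∈ Icc 0 ℓ, dist (c s) (c t) = |s - t|

namespace IsGeodesicPath

variable {c : ℝ → Y} {ℓ t : ℝ}

lemma dist_zero_left (hc : IsGeodesicPath c ℓ) (ht : t ∈ Icc 0 ℓ) : dist (c 0) (c t) = t := by
  rw [hc 0 ⟨le_rfl, ht.1.trans ht.2⟩ t ht, zero_sub, abs_neg, abs_of_nonneg ht.1]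

lemma isGeodesicSegment (hc : IsGeodesicPath c ℓ) (hℓ : 0 ≤ ℓ) :
    IsGeodesicSegment (c '' Icc 0 ℓ) (c 0) (c ℓ) := by
  have hdist : dist (c 0) (c ℓ) = ℓ := hc.dist_zero_left ⟨hℓ, le_rfl⟩
  exact ⟨c, by rwa [hdist], rfl, by rw [hdist], by rw [hdist]⟩

lemma reverse (hc : IsGeodesicPath c ℓ) : IsGeodesicPath (fun t ↦ c (ℓ - t)) ℓ := by
  intro s hs t ht
  rw [hc _ ⟨sub_nonneg.2 hs.2, sub_le_self _ hs.1⟩ _ ⟨sub_nonneg.2 ht.2, sub_le_self _ ht.1⟩,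
    sub_sub_sub_cancel_left, abs_sub_comm]

end IsGeodesicPath

lemma IsGeodesicSpace.exists_isGeodesicPath (hgeo : IsGeodesicSpace Y) (x y : Y) :
    ∃ c : ℝ → Y, IsGeodesicPath c (dist x y) ∧ c 0 = x ∧ c (dist x y) = y := by
  obtain ⟨_, c, hc, hc_zero, hc_end, -⟩ := hgeo x y
  exact ⟨c, hc, hc_zero, hc_end⟩

namespace IsGeodesicSegment

variable {s : Set Y} {x y p : Y}

lemma symm (hs : IsGeodesicSegment s x y) : IsGeodesicSegment s y x := by
  obtain ⟨c, hc, rfl, hc_end, rfl⟩ := hs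
  have hrev := (IsGeodesicPath.reverse hc).isGeodesicSegment dist_nonneg
  rwa [← image_image c, image_const_sub_Icc, sub_self, sub_zero, hc_end] at hrev

lemma dist_add_dist (hs : IsGeodesicSegment s x y) (hp : p ∈ s) :
    dist x p + dist p y = dist x y := by
  obtain ⟨c, hc, hc_zero, hc_end, rfl⟩ := hs
  obtain ⟨t, ht, rfl⟩ := hp
  have hleft : dist x (c t) = t := hc_zero ▸ IsGeodesicPath.dist_zero_left hc ht
  have hright : dist (c t) y = dist x y - t := by
    nth_rewrite 1 [← hc_end]
    rw [hc t ht _ ⟨dist_nonneg, le_rfl⟩, abs_sub_comm, abs_of_nonneg (sub_nonneg.2 ht.2)]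
  linarith

lemma dist_left_le (hs : IsGeodesicSegment s x y) (hp : p ∈ s) : dist x p ≤ dist x y :=
  hs.dist_add_dist hp ▸ le_add_of_nonneg_right dist_nonneg

lemma dist_right_le (hs : IsGeodesicSegment s x y) (hp : p ∈ s) : dist p y ≤ dist x y :=
  hs.dist_add_dist hp ▸ le_add_of_nonneg_left dist_nonneg

end IsGeodesicSegment

lemma IsRay.isGeodesicPath {ρ : ℝ → Y} (hρ : IsRay ρ) (ℓ : ℝ) : IsGeodesicPath ρ ℓ :=
  fun s hs t ht ↦ hρ s t hs.1 ht.1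

lemma IsRay.comp_isometry {X : Type*} [MetricSpace X] {ρ : ℝ → X} (hρ : IsRay ρ) {φ : X → Y}
    (hφ : Isometry φ) : IsRay (fun t ↦ φ (ρ t)) :=
  fun s t hs ht ↦ by rw [hφ.dist_eq, hρ s t hs ht]

namespace AsymptoticRays

variable {ρ₁ ρ₂ ρ₃ : ℝ → Y}

lemma of_dist_le {D : ℝ} (h : ∀ t, 0 ≤ t → dist (ρ₁ t) (ρ₂ t) ≤ D) : AsymptoticRays ρ₁ ρ₂ :=
  ⟨D, fun t ht ↦ ⟨t, ht, h t ht⟩, fun t ht ↦ ⟨t, ht, h t ht⟩⟩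

lemma symm : AsymptoticRays ρ₁ ρ₂ → AsymptoticRays ρ₂ ρ₁ := by
  rintro ⟨D, hforth, hback⟩
  simp only [dist_comm (ρ₁ _)] at hforth hback
  exact ⟨D, hback, hforth⟩

lemma trans : AsymptoticRays ρ₁ ρ₂ → AsymptoticRays ρ₂ ρ₃ → AsymptoticRays ρ₁ ρ₃ := by
  rintro ⟨D, hforth, hback⟩ ⟨D', hforth', hback'⟩
  refine ⟨D + D', fun s hs ↦ ?_, fun u hu ↦ ?_⟩
  · obtain ⟨t, ht, hst⟩ := hforth s hs
    obtain ⟨u, hu, htu⟩ := hforth' t ht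
    exact ⟨u, hu, dist_triangle _ (ρ₂ t) _ |>.trans (add_le_add hst htu)⟩
  · obtain ⟨t, ht, htu⟩ := hback' u hu
    obtain ⟨s, hs, hst⟩ := hback t ht
    exact ⟨s, hs, dist_triangle _ (ρ₂ t) _ |>.trans (add_le_add hst htu)⟩

end AsymptoticRays

lemma exists_isRay_tendsto [ProperSpace Y] {ι : Type*} (U : Ultrafilter ι) {c : ι → ℝ → Y}
    {ℓ : ι → ℝ} {y : Y} (hc : ∀ i, IsGeodesicPath (c i) (ℓ i)) (hc_zero : ∀ i, c i 0 = y)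
    (hℓ : Tendsto ℓ U atTop) :
    ∃ r : ℝ → Y, IsRay r ∧ r 0 = y ∧ ∀ t, 0 ≤ t → Tendsto (fun i ↦ c i t) U (𝓝 (r t)) := by
  have hdomain : ∀ t, 0 ≤ t → ∀ᶠ i in U, t ∈ Icc 0 (ℓ i) := fun t ht ↦
    (hℓ.eventually_ge_atTop t).mono fun i hi ↦ ⟨ht, hi⟩
  have hlimit : ∀ t, 0 ≤ t → ∃ x, Tendsto (fun i ↦ c i t) U (𝓝 x) := by
    intro t ht
    have hball : ∀ᶠ i in U, c i t ∈ Metric.closedBall y t := by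
      filter_upwards [hdomain t ht] with i hi
      rw [Metric.mem_closedBall', ← hc_zero i, (hc i).dist_zero_left hi]
    obtain ⟨x, -, hx⟩ := (isCompact_closedBall y t).ultrafilter_le_nhds
      (U.map fun i ↦ c i t) (le_principal_iff.2 hball)
    exact ⟨x, hx⟩
  have : Nonempty Y := ⟨y⟩
  choose! r hr using hlimit
  refine ⟨r, fun s t hs ht ↦ ?_, ?_, hr⟩
  · refine tendsto_nhds_unique_of_eventuallyEq ((hr s hs).dist (hr t ht)) tendsto_const_nhds ?_
    filter_upwards [hdomain s hs, hdomain t ht] with i hsi hti using hc i s hsi t hti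
  · exact tendsto_nhds_unique (hr 0 le_rfl) (by simp only [hc_zero, tendsto_const_nhds])

end Geodesics

section Hyperbolic

variable {Y : Type*} [MetricSpace Y] {δ : ℝ}

namespace IsDeltaHyperbolic

lemma nonneg [Nonempty Y] (hhyp : IsDeltaHyperbolic Y δ) (hgeo : IsGeodesicSpace Y) : 0 ≤ δ := by
  obtain ⟨x⟩ := ‹Nonempty Y›
  obtain ⟨c, hc, hc_zero, hc_end⟩ := hgeo.exists_isGeodesicPath x x
  have hs := hc.isGeodesicSegment dist_nonneg
  rw [hc_zero, hc_end] at hs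
  obtain ⟨q, -, hq⟩ := (hhyp x x x _ _ _ hs hs hs).1 (c 0) ⟨0, ⟨le_rfl, dist_nonneg⟩, rfl⟩
  exact dist_nonneg.trans hq

lemma exists_dist_le_of_quadrilateral (hhyp : IsDeltaHyperbolic Y δ) (hgeo : IsGeodesicSpace Y)
    {w x y z p : Y} {swx sxy syz szw : Set Y} (hwx : IsGeodesicSegment swx w x)
    (hxy : IsGeodesicSegment sxy x y) (hyz : IsGeodesicSegment syz y z)
    (hzw : IsGeodesicSegment szw z w) (hp : p ∈ swx) :
    ∃ q ∈ sxy ∪ syz ∪ szw, dist p q ≤ 2 * δ := by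
  obtain ⟨diagonal, hyw⟩ := hgeo y w
  obtain ⟨q, hq | hq, hpq⟩ := (hhyp _ _ _ _ _ _ hwx hxy hyw).1 p hp
  · have hδ : 0 ≤ δ := dist_nonneg.trans hpq
    exact ⟨q, .inl (.inl hq), by linarith⟩
  · obtain ⟨q', hq', hqq'⟩ := (hhyp _ _ _ _ _ _ hyw.symm hyz hzw).1 q hq
    exact ⟨q', union_assoc .. ▸ .inr hq', by linarith [dist_triangle p q q']⟩

lemma dist_apply_le_of_common_end (hhyp : IsDeltaHyperbolic Y δ) (hgeo : IsGeodesicSpace Y)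
    {c c' : ℝ → Y} {ℓ ℓ' s : ℝ} (hc : IsGeodesicPath c ℓ) (hc' : IsGeodesicPath c' ℓ')
    (hend : c ℓ = c' ℓ') (hs : s ∈ Icc 0 ℓ) (hs' : s ∈ Icc 0 ℓ') :
    dist (c s) (c' s) ≤ 2 * δ + 3 * dist (c 0) (c' 0) := by
  have hbase : 0 ≤ dist (c 0) (c' 0) := dist_nonneg
  have hcs : dist (c 0) (c s) = s := hc.dist_zero_left hs
  have hc's : dist (c' 0) (c' s) = s := hc'.dist_zero_left hs'
  have hside := hc.isGeodesicSegment (hs.1.trans hs.2)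
  have hside' := (hc'.isGeodesicSegment (hs'.1.trans hs'.2)).symm
  rw [← hend] at hside'
  obtain ⟨base, hbase_seg⟩ := hgeo (c' 0) (c 0)
  obtain ⟨q, ⟨t, ht, rfl⟩ | hq, hpq⟩ :=
    (hhyp _ _ _ _ _ _ hside hside' hbase_seg).1 (c s) ⟨s, hs, rfl⟩
  · have hc't : dist (c' 0) (c' t) = t := hc'.dist_zero_left ht
    have hparam : |t - s| ≤ δ + dist (c 0) (c' 0) := by
      rw [abs_le]
      constructor
      · linarith [dist_triangle4 (c 0) (c' 0) (c' t) (c s), dist_comm (c s) (c' t)]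
      · linarith [dist_triangle4 (c' 0) (c 0) (c s) (c' t), dist_comm (c' 0) (c 0)]
    linarith [dist_triangle (c s) (c' t) (c' s), hc' t ht s hs']
  · have hs_le : s ≤ δ + dist (c 0) (c' 0) := by
      linarith [dist_triangle_right (c 0) (c s) q, hbase_seg.symm.dist_left_le hq]
    linarith [dist_triangle4 (c s) (c 0) (c' 0) (c' s), dist_comm (c s) (c 0)]

lemma exists_dist_le_of_asymptoticRays (hhyp : IsDeltaHyperbolic Y δ) (hgeo : IsGeodesicSpace Y)
    {r ρ : ℝ → Y} (hr : IsRay r) (hρ : IsRay ρ) (hrρ : AsymptoticRays r ρ) :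
    ∃ s t : ℝ, 0 ≤ s ∧ 0 ≤ t ∧ dist (r s) (ρ t) ≤ 2 * δ := by
  obtain ⟨D, hforth, -⟩ := hrρ
  have : Nonempty Y := ⟨r 0⟩
  have hδ : 0 ≤ δ := hhyp.nonneg hgeo
  have hD : 0 ≤ D := by
    obtain ⟨t, -, ht⟩ := hforth 0 le_rfl
    exact dist_nonneg.trans ht
  have hd : 0 ≤ dist (ρ 0) (r 0) := dist_nonneg
  -- `r s` is too far from either end of `r '' [0, T]` to be close to the two short sides.
  obtain ⟨s, hs_gt⟩ := exists_gt (dist (ρ 0) (r 0) + 2 * δ)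
  obtain ⟨T, hT_gt⟩ := exists_gt (s + D + 2 * δ)
  have hs : 0 ≤ s := by linarith
  have hsT : s ≤ T := by linarith
  obtain ⟨T', hT', hTT'⟩ := hforth T (hs.trans hsT)
  obtain ⟨start, hstart⟩ := hgeo (ρ 0) (r 0)
  obtain ⟨finish, hfinish⟩ := hgeo (r T) (ρ T')
  have hr_side := (hr.isGeodesicPath T).isGeodesicSegment (hs.trans hsT)
  have hρ_side := ((hρ.isGeodesicPath T').isGeodesicSegment hT').symm
  obtain ⟨q, (hq | ⟨t, ht, rfl⟩) | hq, hsq⟩ := hhyp.exists_dist_le_of_quadrilateral hgeo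
    hr_side hfinish hρ_side hstart ⟨s, ⟨hs, hsT⟩, rfl⟩
  · have hfar : dist (r T) (r s) = T - s := by
      rw [hr T s (hs.trans hsT) hs, abs_of_nonneg (sub_nonneg.2 hsT)]
    linarith [dist_triangle_right (r T) (r s) q, hfinish.dist_left_le hq]
  · exact ⟨s, t, hs, ht.1, hsq⟩
  · have hfar : dist (r s) (r 0) = s := by rw [hr s 0 hs le_rfl, sub_zero, abs_of_nonneg hs]
    linarith [dist_triangle (r s) q (r 0), hstart.dist_right_le hq]

lemma exists_isRay_asymptotic [ProperSpace Y] (hhyp : IsDeltaHyperbolic Y δ)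
    (hgeo : IsGeodesicSpace Y) {ρ : ℝ → Y} (hρ : IsRay ρ) (y : Y) :
    ∃ r : ℝ → Y, IsRay r ∧ r 0 = y ∧ AsymptoticRays r ρ := by
  choose c hc hc_zero hc_end using fun n : ℕ ↦ hgeo.exists_isGeodesicPath y (ρ n)
  let U : Ultrafilter ℕ := hyperfilter ℕ
  have hcast : Tendsto (fun n : ℕ ↦ (n : ℝ)) U atTop :=
    tendsto_natCast_atTop_atTop.mono_left Nat.hyperfilter_le_atTop
  have hℓ : Tendsto (fun n : ℕ ↦ dist y (ρ n)) U atTop := by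
    refine tendsto_atTop_mono (fun n ↦ ?_) (tendsto_atTop_add_const_right _ (-dist y (ρ 0)) hcast)
    have hρn : dist (ρ 0) (ρ n) = n := (hρ.isGeodesicPath n).dist_zero_left ⟨n.cast_nonneg, le_rfl⟩
    linarith [dist_triangle_left (ρ 0) (ρ n) y]
  obtain ⟨r, hr, hr_zero, hlim⟩ := exists_isRay_tendsto U hc hc_zero hℓ
  refine ⟨r, hr, hr_zero, .of_dist_le (D := 2 * δ + 3 * dist y (ρ 0)) fun t ht ↦ ?_⟩
  refine le_of_tendsto ((hlim t ht).dist tendsto_const_nhds) ?_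
  filter_upwards [hℓ.eventually_ge_atTop t, hcast.eventually_ge_atTop t] with n htℓ htn
  simpa only [hc_zero] using hhyp.dist_apply_le_of_common_end hgeo (hc n) (hρ.isGeodesicPath n)
    (hc_end n) ⟨ht, htℓ⟩ ⟨ht, htn⟩

end IsDeltaHyperbolic

namespace IsHorofunction

variable {ρ₀ : ℝ → Y} {A A' : ℝ} {h h' : Y → ℝ}

lemma comp_isometry {X : Type*} [MetricSpace X] {ρ₁ : ℝ → X} {φ : X → Y}
    (hh : IsHorofunction ρ₀ A h) (hφ : Isometry φ)
    (hφρ : ∀ ρ, IsRay ρ → AsymptoticRays ρ ρ₁ → AsymptoticRays (fun t ↦ φ (ρ t)) ρ₀) :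
    IsHorofunction ρ₁ A (fun x ↦ h (φ x)) :=
  ⟨mul_one (1 : NNReal) ▸ hh.1.comp hφ.lipschitz,
    fun ρ hρ hρρ₁ ↦ hh.2 _ (hρ.comp_isometry hφ) (hφρ ρ hρ hρρ₁)⟩

lemma abs_increment_sub_le_of_isRay (hh : IsHorofunction ρ₀ A h) {r ρ : ℝ → Y} (hr : IsRay r)
    (hρ : IsRay ρ) (hrρ₀ : AsymptoticRays r ρ₀) (hρρ₀ : AsymptoticRays ρ ρ₀) {s t : ℝ}
    (hs : 0 ≤ s) (ht : 0 ≤ t) :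
    |(h (r 0) - h (ρ 0)) - (s - t)| ≤ 2 * A + dist (r s) (ρ t) := by
  have hr_slope := abs_le.1 (hh.2 r hr hrρ₀ 0 s le_rfl hs)
  have hρ_slope := abs_le.1 (hh.2 ρ hρ hρρ₀ 0 t le_rfl ht)
  have hclose : |h (r s) - h (ρ t)| ≤ dist (r s) (ρ t) := by
    simpa only [NNReal.coe_one, one_mul, Real.dist_eq] using hh.1.dist_le_mul (r s) (ρ t)
  rw [abs_le] at hclose ⊢
  constructor <;> linarith

lemma abs_increment_sub_increment_le [ProperSpace Y] (hh : IsHorofunction ρ₀ A h)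
    (hh' : IsHorofunction ρ₀ A' h') (hhyp : IsDeltaHyperbolic Y δ) (hgeo : IsGeodesicSpace Y)
    (hρ₀ : IsRay ρ₀) (x y : Y) :
    |(h x - h y) - (h' x - h' y)| ≤ 2 * A + 2 * A' + 4 * δ := by
  obtain ⟨r, hr, rfl, hrρ₀⟩ := hhyp.exists_isRay_asymptotic hgeo hρ₀ x
  obtain ⟨ρ, hρ, rfl, hρρ₀⟩ := hhyp.exists_isRay_asymptotic hgeo hρ₀ y
  obtain ⟨s, t, hs, ht, hst⟩ :=
    hhyp.exists_dist_le_of_asymptoticRays hgeo hr hρ (hrρ₀.trans hρρ₀.symm)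
  have hincr := hh.abs_increment_sub_le_of_isRay hr hρ hrρ₀ hρρ₀ hs ht
  have hincr' := hh'.abs_increment_sub_le_of_isRay hr hρ hrρ₀ hρρ₀ hs ht
  calc |(h (r 0) - h (ρ 0)) - (h' (r 0) - h' (ρ 0))|
      ≤ |(h (r 0) - h (ρ 0)) - (s - t)| + |(s - t) - (h' (r 0) - h' (ρ 0))| := abs_sub_le ..
    _ ≤ 2 * A + 2 * A' + 4 * δ := by rw [abs_sub_comm (s - t)]; linarith

end IsHorofunction

end Hyperbolic

section Isometries

lemma dist_zpow_apply_le {Y : Type*} [PseudoMetricSpace Y] (φ : Y ≃ᵢ Y) (y : Y) (m n : ℤ) :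
    dist ((φ ^ m) y) ((φ ^ n) y) ≤ |(m : ℝ) - n| * dist y (φ y) := by
  wlog hmn : m ≤ n generalizing m n
  · rw [dist_comm, abs_sub_comm]
    exact this n m (le_of_not_ge hmn)
  obtain ⟨k, rfl⟩ := Int.le.dest hmn
  have hstep (i : ℕ) : dist ((φ ^ (m + i)) y) ((φ ^ (m + (i + 1 : ℕ))) y) ≤ dist y (φ y) := by
    rw [Nat.cast_succ, ← add_assoc, zpow_add_one, IsometryEquiv.mul_apply, IsometryEquiv.dist_eq]
  simpa using dist_le_range_sum_of_dist_le (f := fun i : ℕ ↦ (φ ^ (m + i)) y) k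
    fun {i} _ ↦ hstep i

lemma mul_abs_sub_le_mul_dist_zpow_apply {Y : Type*} [PseudoMetricSpace Y] {h : Y → ℝ} {K : NNReal}
    (hh : LipschitzWith K h) {φ : Y ≃ᵢ Y} {ε : ℝ} (hφ : ∀ z, h z + ε ≤ h (φ z)) (y : Y)
    (m n : ℤ) : ε * |(m : ℝ) - n| ≤ K * dist ((φ ^ m) y) ((φ ^ n) y) := by
  wlog hmn : m ≤ n generalizing m n
  · rw [dist_comm, abs_sub_comm]
    exact this n m (le_of_not_ge hmn)
  have hmono : Monotone fun i : ℤ ↦ h ((φ ^ i) y) - ε * i := by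
    refine monotone_int_of_le_succ fun i ↦ ?_
    have hstep := hφ ((φ ^ i) y)
    rw [← IsometryEquiv.mul_apply, ← zpow_one_add, add_comm 1 i] at hstep
    push_cast
    linarith
  have hgrowth : ε * (n - m) ≤ h ((φ ^ n) y) - h ((φ ^ m) y) := by linarith [hmono hmn]
  rw [abs_sub_comm, abs_of_nonneg (sub_nonneg.2 (Int.cast_le.2 hmn)), dist_comm]
  exact hgrowth.trans ((le_abs_self _).trans (hh.dist_le_mul _ _))

variable {Y : Type*} [MetricSpace Y]

lemma isHyperbolicIsometry_of_add_le [Nonempty Y] {h : Y → ℝ} {K : NNReal}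
    (hh : LipschitzWith K h) {φ : Y ≃ᵢ Y} {ε : ℝ} (hε : 0 < ε)
    (hφ : ∀ z, h z + ε ≤ h (φ z)) : IsHyperbolicIsometry φ := by
  obtain ⟨y⟩ := ‹Nonempty Y›
  have hK : 0 ≤ K / ε := by positivity
  have hd : 0 ≤ dist y (φ y) := dist_nonneg
  have hL : 0 < K / ε + dist y (φ y) + 1 := by positivity
  refine ⟨y, K / ε + dist y (φ y) + 1, 0, hL, fun m n ↦ ⟨?_, ?_⟩⟩
  · rw [sub_zero, inv_mul_le_iff₀ hL]
    calc |(m : ℝ) - n| ≤ K / ε * dist ((φ ^ m) y) ((φ ^ n) y) := by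
          rw [div_mul_eq_mul_div, le_div_iff₀' hε]
          exact mul_abs_sub_le_mul_dist_zpow_apply hh hφ y m n
      _ ≤ (K / ε + dist y (φ y) + 1) * dist ((φ ^ m) y) ((φ ^ n) y) := by gcongr; linarith
  · rw [add_zero, mul_comm]
    exact (dist_zpow_apply_le φ y m n).trans (by gcongr; linarith)

lemma apply_le_add_of_not_isHyperbolicIsometry {h : Y → ℝ} {K : NNReal} (hh : LipschitzWith K h)
    {φ : Y ≃ᵢ Y} {M : ℝ} (hM : ∀ x z, |(h (φ x) - h x) - (h (φ z) - h z)| ≤ M)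
    (hφ : ¬ IsHyperbolicIsometry φ) (y : Y) : h (φ y) ≤ h y + M := by
  contrapose! hφ
  have : Nonempty Y := ⟨y⟩
  have hε : 0 < h (φ y) - h y - M := by linarith
  refine isHyperbolicIsometry_of_add_le hh hε fun z ↦ ?_
  linarith [le_of_abs_le (hM y z)]

end Isometries

lemma exists_invariant_between_sublevels {Y : Type*} [PseudoEMetricSpace Y] {f : Y → ℝ} {C : ℝ}
    {P : Subgroup (Y ≃ᵢ Y)} (hf : ∀ φ ∈ P, ∀ y, f (φ y) ≤ f y + C) (a : ℝ) :
    ∃ B : Set Y, (∀ φ ∈ P, φ '' B = B) ∧ {y | f y ≤ a} ⊆ B ∧ B ⊆ {y | f y ≤ a + C} := by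
  refine ⟨{z | ∃ φ ∈ P, ∃ y, f y ≤ a ∧ φ y = z}, fun φ hφ ↦ ?_, fun y hy ↦ ?_, ?_⟩
  · ext z
    constructor
    · rintro ⟨_, ⟨ψ, hψ, y, hy, rfl⟩, rfl⟩
      exact ⟨φ * ψ, P.mul_mem hφ hψ, y, hy, rfl⟩
    · rintro ⟨ψ, hψ, y, hy, rfl⟩
      exact ⟨φ⁻¹ (ψ y), ⟨φ⁻¹ * ψ, P.mul_mem (P.inv_mem hφ) hψ, y, hy, rfl⟩,
        φ.apply_symm_apply (ψ y)⟩
  · exact ⟨1, P.one_mem, y, hy, rfl⟩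
  · rintro _ ⟨φ, hφ, y, hy, rfl⟩
    exact (hf φ hφ y).trans (add_le_add_left hy C)

/-- For all `δ ≥ 0` and `A ≥ 0` there is `C = C(δ, A)`: if `Y` is a proper geodesic
`δ`-hyperbolic space, `h` a horofunction at a ray `ρ₀` with constant `A`, and `P` a group of
isometries of `Y` fixing the ideal point of `ρ₀` (every element maps rays asymptotic to `ρ₀`
to rays asymptotic to `ρ₀`) and containing no hyperbolic element, then there is a
`P`-invariant set `B` with `{h ≤ 0} ⊆ B ⊆ {h ≤ C}`. -/
theorem exists_invariant_horoball :
    ∀ δ A : ℝ, 0 ≤ δ → 0 ≤ A → ∃ C : ℝ,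
      ∀ (Y : Type*) [MetricSpace Y], ∀ (_ : ProperSpace Y),
        IsGeodesicSpace Y → IsDeltaHyperbolic Y δ →
        ∀ ρ₀ : ℝ → Y, IsRay ρ₀ →
        ∀ h : Y → ℝ, IsHorofunction ρ₀ A h →
        ∀ P : Subgroup (Y ≃ᵢ Y),
          (∀ φ ∈ P, ∀ ρ : ℝ → Y, IsRay ρ → AsymptoticRays ρ ρ₀ →
            AsymptoticRays (fun t => φ (ρ t)) ρ₀) →
          (∀ φ ∈ P, ¬ IsHyperbolicIsometry φ) →
          ∃ B : Set Y, (∀ φ ∈ P, (fun y => φ y) '' B = B) ∧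
            {y : Y | h y ≤ 0} ⊆ B ∧ B ⊆ {y : Y | h y ≤ C} := by
  intro δ A _ _
  refine ⟨4 * A + 4 * δ, fun Y _ _ hgeo hhyp ρ₀ hρ₀ h hh P hP hnot ↦ ?_⟩
  have displacement_le : ∀ φ ∈ P, ∀ y, h (φ y) ≤ h y + (4 * A + 4 * δ) := by
    intro φ hφ y
    have hhφ : IsHorofunction ρ₀ A (fun z ↦ h (φ z)) := hh.comp_isometry φ.isometry (hP φ hφ)
    refine apply_le_add_of_not_isHyperbolicIsometry hh.1 (fun x z ↦ ?_) (hnot φ hφ) y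
    calc |(h (φ x) - h x) - (h (φ z) - h z)|
        = |(h (φ x) - h (φ z)) - (h x - h z)| := by rw [sub_sub_sub_comm]
      _ ≤ 2 * A + 2 * A + 4 * δ := hhφ.abs_increment_sub_increment_le hh hhyp hgeo hρ₀ x z
      _ = 4 * A + 4 * δ := by ring
  simpa using exists_invariant_between_sublevels displacement_le 0
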